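/- Let Ω ⊂ ℝⁿ be a bounded domain with smooth boundary, let B be a majorant, and let u be harmonic in Ω. If u ∈ Λ_B(Ω), i.e. there is C_u > 0 with |u(x) − u(y)| ≤ C_u·B(|x−y|) for all x, y ∈ Ω, then there is a constant C > 0 such that |∇u(x)| ≤ C·B(δ(x))/δ(x) for every x ∈ Ω, where δ(x) is the Euclidean distance of x to bΩ. -/

import Mathlib

/-!
Let `x ∈ Ω` and `δ = infDist x (frontier Ω)`. On the closed ball of radius `r = δ / 2` about `x`,
which lies in `Ω`, the oscillation of `u` is at most `M = C * B δ`. For a unit vector `e`, the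
difference between `u` and its reflection in the hyperplane through `x` orthogonal to `e` is
harmonic, vanishes on that hyperplane and is at most `M` on the sphere. By the weak maximum
principle it stays below `M / r ^ 2` times the harmonic quadratic polynomial
`‖z‖ ^ 2 + n * (r * ⟪e, z⟫ - ⟪e, z⟫ ^ 2)` on the half ball on the side of `e`, where `n` is the
dimension. Both functions vanish at the centre, so comparing their derivatives there in the
direction `e` gives `2 * fderiv ℝ u x e ≤ n * M / r`.
-/

open MeasureTheory Metric Set

noncomputable section

/-- `ℝⁿ` as a Euclidean space. -/
abbrev En (n : ℕ) := EuclideanSpace ℝ (Fin n)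

/-- A majorant: a continuous function `B : [0,∞) → [0,∞)` with `B 0 = 0`,
`B` non-decreasing, and `t ↦ B t / t` non-increasing on `(0,∞)`. -/
def Majorant (B : ℝ → ℝ) : Prop :=
  ContinuousOn B (Ici 0) ∧ (∀ t, 0 ≤ t → 0 ≤ B t) ∧ B 0 = 0 ∧
  (∀ s t, 0 ≤ s → s ≤ t → B s ≤ B t) ∧
  (∀ s t, 0 < s → s ≤ t → B t / t ≤ B s / s)

/-- A regular majorant: a majorant satisfying
`∫₀^δ B t / t dt + δ • ∫_δ^∞ B t / t ^ 2 dt ≤ C * B δ` for all sufficiently small `δ > 0`. -/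
def RegularMajorant (B : ℝ → ℝ) : Prop :=
  Majorant B ∧ ∃ C > (0:ℝ), ∃ δ₁ > (0:ℝ), ∀ δ : ℝ, 0 < δ → δ ≤ δ₁ →
    (∫⁻ t in Ioc (0:ℝ) δ, ENNReal.ofReal (B t / t)) +
      ENNReal.ofReal δ * (∫⁻ t in Ioi δ, ENNReal.ofReal (B t / t ^ 2)) ≤
    ENNReal.ofReal (C * B δ)

/-- `f` is Lipschitz-`B` on `S`, i.e. `f ∈ Λ_B(S)`. -/
def LipschitzB {E : Type*} [NormedAddCommGroup E] (B : ℝ → ℝ) (f : E → ℝ) (S : Set E) : Prop :=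
  ∃ C > (0:ℝ), ∀ x ∈ S, ∀ y ∈ S, |f x - f y| ≤ C * B ‖x - y‖

/-- `u` is harmonic on `Ω`: it is `C²` there and its Laplacian vanishes. -/
def IsHarmonicOn {n : ℕ} (u : En n → ℝ) (Ω : Set (En n)) : Prop :=
  ContDiffOn ℝ 2 u Ω ∧ ∀ x ∈ Ω,
    (∑ i : Fin n, fderiv ℝ (fun y => fderiv ℝ u y (EuclideanSpace.single i 1)) x
      (EuclideanSpace.single i 1)) = 0

/-- `Ω` has `C^∞` smooth boundary: there is a smooth defining function on a
neighbourhood of the boundary with non-vanishing gradient. -/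
def HasSmoothBoundary {n : ℕ} (Ω : Set (En n)) : Prop :=
  ∃ (U : Set (En n)) (r : En n → ℝ), IsOpen U ∧ frontier Ω ⊆ U ∧
    ContDiffOn ℝ (⊤ : ℕ∞) r U ∧ (∀ x ∈ U, (x ∈ Ω ↔ r x < 0)) ∧
    ∀ x ∈ frontier Ω, gradient r x ≠ 0

/-- `ν` is the outward unit normal to `bΩ` at `p`: it is a unit vector and moving
from `p` into `Ω` along `-ν` realizes the distance to the boundary. -/
def IsOutwardUnitNormal {n : ℕ} (Ω : Set (En n)) (p ν : En n) : Prop :=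
  ‖ν‖ = 1 ∧ ∀ᶠ t in nhdsWithin (0:ℝ) (Ioi 0),
    p - t • ν ∈ Ω ∧ infDist (p - t • ν) (frontier Ω) = t

section InteriorGradientEstimate

open Filter InnerProductSpace Laplacian Topology
open Module (finrank)

theorem deriv_deriv_nonpos_of_isLocalMax {g : ℝ → ℝ} {a : ℝ} (hmax : IsLocalMax g a)
    (hg : ContinuousAt g a) : deriv (deriv g) a ≤ 0 := by
  by_contra! hpos
  have hmin : IsLocalMin g a := isLocalMin_of_deriv_deriv_pos hpos hmax.deriv_eq_zero hg
  have hconst : g =ᶠ[𝓝 a] fun _ => g a := by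
    filter_upwards [hmax, hmin] with t h₁ h₂ using le_antisymm h₁ h₂
  have hzero : deriv (deriv g) a = 0 := by simp [hconst.deriv.deriv_eq]
  exact hpos.ne' hzero

section SecondDerivative

variable {E F : Type*} [NormedAddCommGroup E] [NormedSpace ℝ E]
  [NormedAddCommGroup F] [NormedSpace ℝ F] {f : E → F} {x : E}

theorem deriv_comp_add_smul {v : E} {t : ℝ} (hf : DifferentiableAt ℝ f (x + t • v)) :
    deriv (fun s : ℝ => f (x + s • v)) t = fderiv ℝ f (x + t • v) v := by
  have hline : HasDerivAt (fun s : ℝ => x + s • v) v t := by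
    simpa using ((hasDerivAt_id t).smul_const v).const_add x
  exact (hf.hasFDerivAt.comp_hasDerivAt t hline).deriv

theorem fderiv_fderiv_apply_eq_iteratedFDeriv (hf : ContDiffAt ℝ 2 f x) (v w : E) :
    fderiv ℝ (fun y => fderiv ℝ f y v) x w = iteratedFDeriv ℝ 2 f x ![w, v] := by
  have hdiff : DifferentiableAt ℝ (fderiv ℝ f) x :=
    (hf.fderiv_right (m := 1) (by norm_num)).differentiableAt one_ne_zero
  simp [fderiv_clm_apply hdiff (differentiableAt_const v), iteratedFDeriv_two_apply]

theorem deriv_deriv_comp_add_smul (hf : ContDiffAt ℝ 2 f x) (v : E) :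
    deriv (deriv fun t : ℝ => f (x + t • v)) 0 = iteratedFDeriv ℝ 2 f x ![v, v] := by
  have hcont : Tendsto (fun t : ℝ => x + t • v) (𝓝 0) (𝓝 x) :=
    Continuous.tendsto' (by fun_prop) _ _ (by simp)
  have hfirst : deriv (fun t : ℝ => f (x + t • v)) =ᶠ[𝓝 0] fun t => fderiv ℝ f (x + t • v) v := by
    filter_upwards [hcont.eventually (hf.eventually (by simp))] with t ht
    exact deriv_comp_add_smul (ht.differentiableAt two_ne_zero)
  have hdiff : DifferentiableAt ℝ (fun y => fderiv ℝ f y v) x :=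
    ((hf.fderiv_right (m := 1) (by norm_num)).differentiableAt one_ne_zero).clm_apply
      (differentiableAt_const v)
  calc deriv (deriv fun t : ℝ => f (x + t • v)) 0
      = deriv (fun t : ℝ => fderiv ℝ f (x + t • v) v) 0 := hfirst.deriv_eq
    _ = fderiv ℝ (fun y => fderiv ℝ f y v) x v := by
      simpa using deriv_comp_add_smul (f := fun y => fderiv ℝ f y v) (x := x) (v := v) (t := 0)
        (by simpa using hdiff)
    _ = iteratedFDeriv ℝ 2 f x ![v, v] := fderiv_fderiv_apply_eq_iteratedFDeriv hf v v

end SecondDerivative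

variable {E : Type*} [NormedAddCommGroup E] [InnerProductSpace ℝ E]

section Laplacian

variable [FiniteDimensional ℝ E]

theorem laplacian_nonpos_of_isLocalMax {f : E → ℝ} {x : E} (hmax : IsLocalMax f x)
    (hf : ContDiffAt ℝ 2 f x) : Δ f x ≤ 0 := by
  rw [laplacian_eq_iteratedFDeriv_stdOrthonormalBasis]
  refine Finset.sum_nonpos fun i _ => ?_
  set v := stdOrthonormalBasis ℝ E i
  have hline : Tendsto (fun t : ℝ => x + t • v) (𝓝 0) (𝓝 x) :=
    Continuous.tendsto' (by fun_prop) _ _ (by simp)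
  have hmax_line : IsLocalMax (fun t : ℝ => f (x + t • v)) 0 := by
    simpa [IsLocalMax, IsMaxFilter] using hline.eventually hmax
  have hcont_line : ContinuousAt (fun t : ℝ => f (x + t • v)) 0 := by
    simpa [ContinuousAt, Function.comp_def] using hf.continuousAt.tendsto.comp hline
  rw [← deriv_deriv_comp_add_smul hf]
  exact deriv_deriv_nonpos_of_isLocalMax hmax_line hcont_line

theorem laplacian_norm_sq : Δ (fun z : E => ‖z‖ ^ 2) = fun _ => 2 * (finrank ℝ E : ℝ) := by
  ext x
  have h : fderiv ℝ (fderiv ℝ fun z : E => ‖z‖ ^ 2) x = 2 • innerSL ℝ := by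
    rw [fderiv_norm_sq]
    exact (2 • innerSL ℝ (E := E)).fderiv
  have hinner (v w : E) : innerSL ℝ v w = ⟪v, w⟫_ℝ := rfl
  simp [laplacian_eq_iteratedFDeriv_stdOrthonormalBasis, iteratedFDeriv_two_apply, h, hinner,
    mul_comm]

theorem laplacian_inner (e : E) : Δ (fun z : E => ⟪e, z⟫_ℝ) = 0 := by
  ext x
  have h : fderiv ℝ (fun z : E => ⟪e, z⟫_ℝ) = fun _ => innerSL ℝ e :=
    funext fun _ => (innerSL ℝ e).fderiv
  simp [laplacian_eq_iteratedFDeriv_stdOrthonormalBasis, iteratedFDeriv_two_apply, h]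

theorem laplacian_inner_sq (e : E) :
    Δ (fun z : E => ⟪e, z⟫_ℝ ^ 2) = fun _ => 2 * ‖e‖ ^ 2 := by
  ext x
  have h : fderiv ℝ (fun z : E => ⟪e, z⟫_ℝ ^ 2) = (2 • innerSL ℝ e).smulRight (innerSL ℝ e) := by
    ext z v
    have hz := ((innerSL ℝ e).hasFDerivAt (x := z)).pow 2
    simpa using DFunLike.congr_fun hz.fderiv v
  simp only [laplacian_eq_iteratedFDeriv_stdOrthonormalBasis, iteratedFDeriv_two_apply, h,
    ContinuousLinearMap.fderiv]
  simp [← (stdOrthonormalBasis ℝ E).sum_sq_inner_left e, Finset.mul_sum, pow_two, mul_assoc]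

section IsometryInvariance

variable {E' F : Type*} [NormedAddCommGroup E'] [InnerProductSpace ℝ E'] [FiniteDimensional ℝ E']
  [NormedAddCommGroup F] [NormedSpace ℝ F]

theorem laplacian_comp_add_linearIsometryEquiv (f : E' → F) (x : E') (L : E ≃ₗᵢ[ℝ] E') :
    Δ (fun z => f (x + L z)) = fun z => Δ f (x + L z) := by
  ext z
  have h : iteratedFDeriv ℝ 2 (fun z => f (x + L z)) z =
      (iteratedFDeriv ℝ 2 f (x + L z)).compContinuousLinearMap fun _ => (L : E →L[ℝ] E') := by
    rw [← iteratedFDeriv_comp_add_left]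
    simpa [iteratedFDerivWithin_univ, Function.comp_def] using
      L.toContinuousLinearEquiv.iteratedFDerivWithin_comp_right (fun z => f (x + z))
        uniqueDiffOn_univ (mem_univ z) 2
  rw [laplacian_eq_iteratedFDeriv_stdOrthonormalBasis,
    laplacian_eq_iteratedFDeriv_orthonormalBasis f ((stdOrthonormalBasis ℝ E).map L)]
  simp [h, iteratedFDeriv_two_apply]

theorem harmonicAt_comp_add_linearIsometryEquiv {f : E' → F} {x : E'} {z : E}
    (L : E ≃ₗᵢ[ℝ] E') (hf : HarmonicAt f (x + L z)) :
    HarmonicAt (fun z => f (x + L z)) z := by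
  have hcont : ContinuousAt (fun z => x + L z) z := by fun_prop
  refine ⟨hf.1.comp z (contDiffAt_const.add L.contDiff.contDiffAt), ?_⟩
  rw [laplacian_comp_add_linearIsometryEquiv]
  exact hcont.eventually hf.2

end IsometryInvariance

section MaximumPrinciple

variable {K : Set E} {f : E → ℝ}

theorem exists_mem_frontier_isMaxOn_of_laplacian_pos (hK : IsCompact K) (hK_ne : K.Nonempty)
    (hf : ContinuousOn f K) (hf₂ : ∀ x ∈ interior K, ContDiffAt ℝ 2 f x)
    (hΔ : ∀ x ∈ interior K, 0 < Δ f x) : ∃ x ∈ frontier K, IsMaxOn f K x := by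
  obtain ⟨x, hxK, hmax⟩ := hK.exists_isMaxOn hK_ne hf
  refine ⟨x, ⟨subset_closure hxK, fun hx => ?_⟩, hmax⟩
  have hlocal : IsLocalMax f x := hmax.isLocalMax (mem_interior_iff_mem_nhds.mp hx)
  exact (hΔ x hx).not_ge (laplacian_nonpos_of_isLocalMax hlocal (hf₂ x hx))

theorem le_of_forall_mem_frontier_le_of_laplacian_nonneg [Nontrivial E] (hK : IsCompact K)
    (hf : ContinuousOn f K) (hf₂ : ∀ x ∈ interior K, ContDiffAt ℝ 2 f x)
    (hΔ : ∀ x ∈ interior K, 0 ≤ Δ f x) {c : ℝ} (hc : ∀ x ∈ frontier K, f x ≤ c) {x : E}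
    (hx : x ∈ K) : f x ≤ c := by
  obtain ⟨R, hR, hKR⟩ := hK.isBounded.exists_pos_norm_le
  refine le_of_forall_pos_le_add fun ε hε => ?_
  set η := ε / R ^ 2
  have hη : 0 < η := by positivity
  have hsq (y : E) : ContDiffAt ℝ 2 (fun z : E => ‖z‖ ^ 2) y := (contDiff_norm_sq ℝ).contDiffAt
  have hsmul (y : E) : ContDiffAt ℝ 2 (η • fun z : E => ‖z‖ ^ 2) y := (hsq y).const_smul η
  obtain ⟨z, hz, hmax⟩ := exists_mem_frontier_isMaxOn_of_laplacian_pos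
      (f := f + η • fun z : E => ‖z‖ ^ 2) hK ⟨x, hx⟩ (hf.add (by fun_prop))
      (fun y hy => (hf₂ y hy).add (hsmul y)) fun y hy => by
    have hdim : 0 < (finrank ℝ E : ℝ) := mod_cast Module.finrank_pos
    rw [(hf₂ y hy).laplacian_add (hsmul y), laplacian_smul η (hsq y), laplacian_norm_sq]
    exact add_pos_of_nonneg_of_pos (hΔ y hy) (mul_pos hη (by positivity))
  have hzK : z ∈ K := hK.isClosed.frontier_subset hz
  calc f x ≤ f x + η * ‖x‖ ^ 2 := le_add_of_nonneg_right (by positivity)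
    _ ≤ f z + η * ‖z‖ ^ 2 := hmax hx
    _ ≤ c + η * R ^ 2 := by gcongr; exacts [hc z hz, hKR z hzK]
    _ = c + ε := by rw [div_mul_cancel₀ ε (by positivity)]

end MaximumPrinciple

end Laplacian

section HalfBall

/-- The half `{z : ‖z‖ ≤ r, 0 ≤ ⟪e, z⟫}` of the ball of radius `r` about the origin. -/
def closedHalfBall (e : E) (r : ℝ) : Set E := closedBall 0 r ∩ {z | 0 ≤ ⟪e, z⟫_ℝ}

/-- For a unit vector `e`, a harmonic quadratic polynomial which is nonnegative on
`closedHalfBall e r` and at least `r ^ 2` on its spherical part. It is the upper barrier for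
harmonic functions on the half ball that vanish on the flat part of the boundary. -/
def halfBallBarrier (e : E) (r : ℝ) (z : E) : ℝ :=
  ‖z‖ ^ 2 + finrank ℝ E * (r * ⟪e, z⟫_ℝ - ⟪e, z⟫_ℝ ^ 2)

variable {e x : E} {r M : ℝ} {u : E → ℝ}

theorem isClosed_closedHalfBall : IsClosed (closedHalfBall e r) :=
  isClosed_closedBall.inter (isClosed_le continuous_const (by fun_prop))

theorem convex_closedHalfBall : Convex ℝ (closedHalfBall e r) :=
  (convex_closedBall 0 r).inter (convex_halfSpace_ge (innerSL ℝ e).isLinear 0)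

theorem norm_eq_or_inner_eq_zero_of_mem_frontier_closedHalfBall {z : E}
    (hz : z ∈ frontier (closedHalfBall e r)) : ‖z‖ = r ∨ ⟪e, z⟫_ℝ = 0 := by
  rw [isClosed_closedHalfBall.frontier_eq] at hz
  by_contra! h
  have hopen : IsOpen (ball (0 : E) r ∩ {y | 0 < ⟪e, y⟫_ℝ}) :=
    isOpen_ball.inter (isOpen_lt continuous_const (by fun_prop))
  refine hz.2 (interior_maximal ?_ hopen ⟨?_, hz.1.2.lt_of_ne' h.2⟩)
  · exact inter_subset_inter ball_subset_closedBall fun y (hy : 0 < ⟪e, y⟫_ℝ) => hy.le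
  · simpa using (mem_closedBall_zero_iff.mp hz.1.1).lt_of_ne h.1

theorem norm_sq_le_halfBallBarrier (he : ‖e‖ = 1) {z : E} (hz : z ∈ closedHalfBall e r) :
    ‖z‖ ^ 2 ≤ halfBallBarrier e r z := by
  have hinner : ⟪e, z⟫_ℝ ≤ r := (real_inner_le_norm e z).trans <| by
    simpa [he] using hz.1
  have : 0 ≤ ⟪e, z⟫_ℝ * (r - ⟪e, z⟫_ℝ) := mul_nonneg hz.2 (sub_nonneg.mpr hinner)
  refine le_add_of_nonneg_right (mul_nonneg (Nat.cast_nonneg _) ?_)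
  linarith

theorem hasFDerivAt_halfBallBarrier_zero :
    HasFDerivAt (halfBallBarrier e r) ((finrank ℝ E * r) • innerSL ℝ e) 0 := by
  have hinner := (innerSL ℝ e).hasFDerivAt (x := (0 : E))
  have hsq := (hasFDerivAt_id (𝕜 := ℝ) (0 : E)).norm_sq
  refine (hsq.add (((hinner.const_mul r).sub (hinner.pow 2)).const_mul
    (finrank ℝ E : ℝ))).congr_fderiv ?_
  ext v
  simp [mul_assoc]

theorem contDiff_halfBallBarrier {n : WithTop ℕ∞} : ContDiff ℝ n (halfBallBarrier e r) := by
  have hinner : ContDiff ℝ n fun z : E => ⟪e, z⟫_ℝ := (innerSL ℝ e).contDiff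
  exact (contDiff_norm_sq ℝ).add
    (contDiff_const.mul ((contDiff_const.mul hinner).sub (hinner.pow 2)))

variable [FiniteDimensional ℝ E]

theorem isCompact_closedHalfBall : IsCompact (closedHalfBall e r) :=
  (isCompact_closedBall 0 r).of_isClosed_subset isClosed_closedHalfBall inter_subset_left

theorem harmonicAt_halfBallBarrier (he : ‖e‖ = 1) (z : E) :
    HarmonicAt (halfBallBarrier e r) z := by
  refine ⟨contDiff_halfBallBarrier.contDiffAt, .of_forall fun y => ?_⟩
  have hsq : ContDiffAt ℝ 2 (fun z : E => ‖z‖ ^ 2) y := (contDiff_norm_sq ℝ).contDiffAt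
  have hin : ContDiffAt ℝ 2 (fun z : E => ⟪e, z⟫_ℝ) y := (innerSL ℝ e).contDiff.contDiffAt
  have hin_sq : ContDiffAt ℝ 2 (fun z : E => ⟪e, z⟫_ℝ ^ 2) y := hin.pow 2
  have hr_in : ContDiffAt ℝ 2 (r • fun z : E => ⟪e, z⟫_ℝ) y := hin.const_smul r
  have hsub : ContDiffAt ℝ 2 ((r • fun z : E => ⟪e, z⟫_ℝ) - fun z : E => ⟪e, z⟫_ℝ ^ 2) y :=
    hr_in.sub hin_sq
  have hn_sub : ContDiffAt ℝ 2 ((finrank ℝ E : ℝ) •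
      ((r • fun z : E => ⟪e, z⟫_ℝ) - fun z : E => ⟪e, z⟫_ℝ ^ 2)) y :=
    hsub.const_smul (finrank ℝ E : ℝ)
  calc Δ (halfBallBarrier e r) y
      = Δ ((fun z : E => ‖z‖ ^ 2) + (finrank ℝ E : ℝ) •
          ((r • fun z : E => ⟪e, z⟫_ℝ) - fun z : E => ⟪e, z⟫_ℝ ^ 2)) y := rfl
    _ = 2 * finrank ℝ E + finrank ℝ E * (r * 0 - 2 * ‖e‖ ^ 2) := by
      rw [hsq.laplacian_add hn_sub, laplacian_smul _ hsub, hr_in.laplacian_sub hin_sq,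
        laplacian_smul r hin, laplacian_norm_sq, laplacian_inner, laplacian_inner_sq]
      rfl
    _ = 0 := by rw [he]; ring

theorem sub_reflection_le_halfBallBarrier (hr : 0 < r) (he : ‖e‖ = 1)
    (hu : HarmonicOnNhd u (closedBall x r))
    (hosc : ∀ a ∈ closedBall x r, ∀ b ∈ closedBall x r, u a - u b ≤ M) {z : E}
    (hz : z ∈ closedHalfBall e r) :
    u (x + z) - u (x + (ℝ ∙ e)ᗮ.reflection z) ≤ M / r ^ 2 * halfBallBarrier e r z := by
  have : Nontrivial E := ⟨e, 0, norm_ne_zero_iff.mp (he ▸ one_ne_zero)⟩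
  set L := (ℝ ∙ e)ᗮ.reflection
  have hM : 0 ≤ M := by
    simpa using hosc x (mem_closedBall_self hr.le) x (mem_closedBall_self hr.le)
  have hmem (T : E ≃ₗᵢ[ℝ] E) {y : E} (hy : y ∈ closedHalfBall e r) :
      x + T y ∈ closedBall x r := by simpa using hy.1
  have hharm (y : E) (hy : y ∈ closedHalfBall e r) : HarmonicAt ((fun z => u (x + z)) -
      (fun z => u (x + L z)) - (M / r ^ 2) • halfBallBarrier e r) y := by
    have hrefl := harmonicAt_comp_add_linearIsometryEquiv (x := x) L (hu _ (hmem L hy))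
    have htrans := harmonicAt_comp_add_linearIsometryEquiv (x := x) (.refl ℝ E)
      (hu _ (hmem (.refl ℝ E) hy))
    exact (htrans.sub hrefl).sub (harmonicAt_halfBallBarrier he y).const_smul
  refine sub_nonpos.mp (le_of_forall_mem_frontier_le_of_laplacian_nonneg isCompact_closedHalfBall
    (HarmonicOnNhd.continuousOn hharm) (fun y hy => (hharm y (interior_subset hy)).1)
    (fun y hy => (hharm y (interior_subset hy)).2.self_of_nhds.ge) (fun y hy => ?_) hz)
  have hyK := isClosed_closedHalfBall.frontier_subset hy
  have hbarrier := norm_sq_le_halfBallBarrier he hyK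
  refine sub_nonpos.mpr ?_
  change u (x + y) - u (x + L y) ≤ M / r ^ 2 * halfBallBarrier e r y
  rcases norm_eq_or_inner_eq_zero_of_mem_frontier_closedHalfBall hy with hyr | hye
  · calc u (x + y) - u (x + L y) ≤ M := hosc _ (hmem (.refl ℝ E) hyK) _ (hmem L hyK)
      _ = M / r ^ 2 * ‖y‖ ^ 2 := by rw [hyr, div_mul_cancel₀ M (by positivity)]
      _ ≤ M / r ^ 2 * halfBallBarrier e r y := by gcongr
  · have hfix : L y = y := Submodule.reflection_mem_subspace_eq_self
      (Submodule.mem_orthogonal_singleton_iff_inner_right.mpr hye)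
    rw [hfix, sub_self]
    have := (sq_nonneg ‖y‖).trans hbarrier
    positivity

theorem fderiv_le_of_forall_sub_le (hr : 0 < r) (he : ‖e‖ = 1)
    (hu : HarmonicOnNhd u (closedBall x r))
    (hosc : ∀ a ∈ closedBall x r, ∀ b ∈ closedBall x r, u a - u b ≤ M) :
    fderiv ℝ u x e ≤ finrank ℝ E * M / (2 * r) := by
  set L := (ℝ ∙ e)ᗮ.reflection
  set w : E → ℝ := fun z => u (x + z) - u (x + L z) - M / r ^ 2 * halfBallBarrier e r z
  have hmax : IsMaxOn w (closedHalfBall e r) 0 := fun z hz => by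
    simpa [w, halfBallBarrier] using sub_reflection_le_halfBallBarrier hr he hu hosc hz
  have hux : HasFDerivAt u (fderiv ℝ u x) x :=
    ((hu x (mem_closedBall_self hr.le)).1.differentiableAt two_ne_zero).hasFDerivAt
  have hdir (T : E ≃ₗᵢ[ℝ] E) : HasFDerivAt (fun z => u (x + T z))
      (fderiv ℝ u x ∘L (T : E →L[ℝ] E)) 0 :=
    HasFDerivAt.comp 0 (by simpa using hux) ((T : E →L[ℝ] E).hasFDerivAt.const_add x)
  have hw := ((hdir (.refl ℝ E)).sub (hdir L)).sub
    (hasFDerivAt_halfBallBarrier_zero (e := e) (r := r).const_mul (M / r ^ 2))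
  have h₀ : (0 : E) ∈ closedHalfBall e r := by simp [closedHalfBall, hr.le]
  have h₁ : r • e ∈ closedHalfBall e r := by
    simp [closedHalfBall, norm_smul, he, abs_of_pos hr, inner_smul_right, hr.le]
  have hle := hmax.localize.hasFDerivWithinAt_nonpos hw.hasFDerivWithinAt
    (sub_mem_posTangentConeAt_of_segment_subset (convex_closedHalfBall.segment_subset h₀ h₁))
  have hLe : L e = -e := Submodule.reflection_orthogonalComplement_singleton_eq_neg e
  have hslope : r * (fderiv ℝ u x e + fderiv ℝ u x e - M / r ^ 2 * (finrank ℝ E * r)) ≤ 0 := by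
    simpa [hLe, he] using hle
  calc fderiv ℝ u x e ≤ M / r ^ 2 * (finrank ℝ E * r) / 2 := by
        linarith [nonpos_of_mul_nonpos_right hslope hr]
    _ = finrank ℝ E * M / (2 * r) := by field_simp

theorem norm_fderiv_le_of_forall_sub_le (hr : 0 < r) (hu : HarmonicOnNhd u (closedBall x r))
    (hosc : ∀ a ∈ closedBall x r, ∀ b ∈ closedBall x r, u a - u b ≤ M) :
    ‖fderiv ℝ u x‖ ≤ finrank ℝ E * M / (2 * r) := by
  have hM : 0 ≤ M := by
    simpa using hosc x (mem_closedBall_self hr.le) x (mem_closedBall_self hr.le)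
  refine ContinuousLinearMap.opNorm_le_of_unit_norm (by positivity) fun e he => abs_le'.mpr
    ⟨fderiv_le_of_forall_sub_le hr he hu hosc, ?_⟩
  simpa using fderiv_le_of_forall_sub_le hr ((norm_neg e).trans he) hu hosc

end HalfBall

theorem ball_infDist_frontier_subset [FiniteDimensional ℝ E] {s : Set E} {x : E} (hx : x ∈ s) :
    ball x (infDist x (frontier s)) ⊆ s := by
  rcases eq_or_ne s univ with rfl | hs
  · exact subset_univ _
  obtain ⟨y, hy, hxy⟩ := exists_mem_frontier_infDist_compl_eq_dist hx hs
  exact (ball_subset_ball ((infDist_le_dist_of_mem hy).trans_eq hxy.symm)).trans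
    ball_infDist_compl_subset

theorem infDist_frontier_pos {X : Type*} [PseudoMetricSpace X] [PreconnectedSpace X] {s : Set X}
    {x : X} (hs : IsOpen s) (hs_ne : s ≠ univ) (hx : x ∈ s) : 0 < infDist x (frontier s) :=
  (isClosed_frontier.notMem_iff_infDist_pos (nonempty_frontier_iff.mpr ⟨⟨x, hx⟩, hs_ne⟩)).mp
    fun hfr => hs.inter_frontier_eq.subset ⟨hx, hfr⟩

theorem lipschitzB_harmonic_gradient_bound_general [FiniteDimensional ℝ E] {Ω : Set E}
    (hΩ : IsOpen Ω) (hΩ_ne : Ω ≠ univ) {B : ℝ → ℝ} (hB : MonotoneOn B (Ici 0)) {u : E → ℝ}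
    (hu : HarmonicOnNhd u Ω) {C : ℝ} (hC : 0 ≤ C)
    (hLip : ∀ x ∈ Ω, ∀ y ∈ Ω, |u x - u y| ≤ C * B ‖x - y‖) {x : E} (hx : x ∈ Ω) :
    ‖fderiv ℝ u x‖ ≤
      finrank ℝ E * C * B (infDist x (frontier Ω)) / infDist x (frontier Ω) := by
  set δ := infDist x (frontier Ω)
  have hδ : 0 < δ := infDist_frontier_pos hΩ hΩ_ne hx
  have hsub : closedBall x (δ / 2) ⊆ Ω :=
    (closedBall_subset_ball (half_lt_self hδ)).trans (ball_infDist_frontier_subset hx)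
  have hosc (a) (ha : a ∈ closedBall x (δ / 2)) (b) (hb : b ∈ closedBall x (δ / 2)) :
      u a - u b ≤ C * B δ := by
    have hab : ‖a - b‖ ≤ δ := calc
      ‖a - b‖ = dist a b := (dist_eq_norm a b).symm
      _ ≤ dist a x + dist b x := dist_triangle_right a b x
      _ ≤ δ := (add_le_add ha hb).trans_eq (add_halves δ)
    calc u a - u b ≤ C * B ‖a - b‖ := (le_abs_self _).trans (hLip a (hsub ha) b (hsub hb))
      _ ≤ C * B δ := by gcongr; exact hB (norm_nonneg _) hδ.le hab
  calc ‖fderiv ℝ u x‖ ≤ finrank ℝ E * (C * B δ) / (2 * (δ / 2)) :=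
        norm_fderiv_le_of_forall_sub_le (half_pos hδ) (hu.mono hsub) hosc
    _ = finrank ℝ E * C * B δ / δ := by rw [mul_div_cancel₀ δ two_ne_zero, mul_assoc]

theorem IsHarmonicOn.harmonicOnNhd {n : ℕ} {u : En n → ℝ} {Ω : Set (En n)}
    (hu : IsHarmonicOn u Ω) (hΩ : IsOpen Ω) : HarmonicOnNhd u Ω := by
  have hC2 (x) (hx : x ∈ Ω) : ContDiffAt ℝ 2 u x := hu.1.contDiffAt (hΩ.mem_nhds hx)
  refine fun x hx => ⟨hC2 x hx, ?_⟩
  filter_upwards [hΩ.mem_nhds hx] with y hy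
  simpa [laplacian_eq_iteratedFDeriv_orthonormalBasis u (EuclideanSpace.basisFun (Fin n) ℝ),
    fderiv_fderiv_apply_eq_iteratedFDeriv (hC2 y hy)] using hu.2 y hy

end InteriorGradientEstimate

/-- A harmonic function which is Lipschitz-`B` for a majorant `B` has its
gradient bounded by a constant times `B (δ x) / δ x`. -/
theorem lipschitzB_harmonic_gradient_bound
    {n : ℕ} (Ω : Set (En n)) (hΩ_open : IsOpen Ω) (hΩ_conn : IsConnected Ω)
    (hΩ_bdd : Bornology.IsBounded Ω) (hΩ_smooth : HasSmoothBoundary Ω)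
    (B : ℝ → ℝ) (hB : Majorant B)
    (u : En n → ℝ) (hu : IsHarmonicOn u Ω)
    (Cu : ℝ) (hCu : 0 < Cu)
    (hLip : ∀ x ∈ Ω, ∀ y ∈ Ω, |u x - u y| ≤ Cu * B ‖x - y‖) :
    ∃ C > (0:ℝ), ∀ x ∈ Ω,
      ‖gradient u x‖ ≤ C * B (infDist x (frontier Ω)) / infDist x (frontier Ω) := by
  obtain ⟨-, -, -, hB_mono, -⟩ := hB
  rcases subsingleton_or_nontrivial (En n) with _ | _
  · exact ⟨1, one_pos, fun x _ => by simp [Subsingleton.elim (gradient u x) 0]⟩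
  have hΩ_ne : Ω ≠ univ := fun h => NormedSpace.unbounded_univ ℝ (En n) (h ▸ hΩ_bdd)
  refine ⟨Module.finrank ℝ (En n) * Cu, mul_pos (mod_cast Module.finrank_pos) hCu, fun x hx => ?_⟩
  rw [gradient, LinearIsometryEquiv.norm_map]
  exact lipschitzB_harmonic_gradient_bound_general hΩ_open hΩ_ne
    (fun s hs t _ hst => hB_mono s t hs hst) (hu.harmonicOnNhd hΩ_open) hCu.le hLip hx
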